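/- arXiv:0807.0095 — 2 statements merged into one kernel-verified Lean document; each statement's English description precedes it below -/
import Mathlib

section
/- If the deficiency indices of S are finite, then T = S*, the auxiliary space G is finite dimensional, G₀ = G, and any generalized Q-function of {S, A, T} is an ordinary Q-function of the pair {S, A}. -/
/-!
Fix a non-real `μ`. Since `A` is selfadjoint, `A - μ` is onto, so every extension `T` of `A` has
graph `T = graph A + {(x, μ x) | x ∈ ker (T - μ)}`. When `ker (S* - μ)` is finite dimensional, the
graph of `T` is therefore a finite-dimensional enlargement of a closed subspace: it is closed, and
`T = closure T = S*`. If moreover `A - lam₀` is injective, then `ker (T - lam₀)` embeds into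
`graph T / graph A`, so it is finite dimensional, and so is its preimage `G₀` under `Γ₀`; a dense
finite-dimensional subspace is everything.
-/

open scoped InnerProductSpace ComplexConjugate

noncomputable section

variable {H G : Type*}
  [NormedAddCommGroup H] [InnerProductSpace ℂ H] [CompleteSpace H]
  [NormedAddCommGroup G] [InnerProductSpace ℂ G] [CompleteSpace G]

/-- `R` is the (bounded, everywhere defined) resolvent of `A` at `lam`. -/
def IsResolventAt (A : H →ₗ.[ℂ] H) (lam : ℂ) (R : H →L[ℂ] H) : Prop :=
  (∀ x : H, ∃ hx : R x ∈ A.domain, A ⟨R x, hx⟩ - lam • R x = x) ∧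
  (∀ x : A.domain, R (A x - lam • (x : H)) = x)

/-- `lam` belongs to the resolvent set of `A`. -/
def InResolventSet (A : H →ₗ.[ℂ] H) (lam : ℂ) : Prop :=
  ∃ R : H →L[ℂ] H, IsResolventAt A lam R

/-- The defect set `ker (T - lam)` of a partially defined operator `T`. -/
def kerAt (T : H →ₗ.[ℂ] H) (lam : ℂ) : Set H :=
  {f | ∃ hf : f ∈ T.domain, T ⟨f, hf⟩ = lam • f}

/-- A set is finite dimensional: it is contained in the span of finitely many vectors. -/
def SpannedByFinitelyMany (M : Set H) : Prop :=
  ∃ (n : ℕ) (b : Fin n → H), M ⊆ (Submodule.span ℂ (Set.range b) : Set H)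

section LinearAlgebra

theorem finiteDimensional_of_comap_eq_bot_of_range_le_sup {K V W : Type*} [DivisionRing K]
    [AddCommGroup V] [Module K V] [AddCommGroup W] [Module K W] {p q : Submodule K W}
    [FiniteDimensional K q] {f : V →ₗ[K] W} (hker : p.comap f = ⊥)
    (hrange : LinearMap.range f ≤ p ⊔ q) : FiniteDimensional K V := by
  have hmem (v : V) : p.mkQ (f v) ∈ q.map p.mkQ := by
    obtain ⟨x, hx, y, hy, hxy⟩ := Submodule.mem_sup.mp (hrange ⟨v, rfl⟩)
    refine ⟨y, hy, ?_⟩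
    rw [← hxy, map_add, right_eq_add]
    exact (Submodule.Quotient.mk_eq_zero p).mpr hx
  have hinj : Function.Injective (p.mkQ ∘ₗ f) := by
    rw [← LinearMap.ker_eq_bot, LinearMap.ker_comp, Submodule.ker_mkQ, hker]
  exact FiniteDimensional.of_injective ((p.mkQ ∘ₗ f).codRestrict (q.map p.mkQ) hmem)
    ((LinearMap.injective_codRestrict_iff ..).mpr hinj)

variable {R E : Type*} [CommRing R] [AddCommGroup E] [Module R E]

/-- The embedding `x ↦ (x, μ x)` of `E` onto the graph of multiplication by `μ`. -/
def smulGraphMap (μ : R) : E →ₗ[R] E × E :=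
  LinearMap.id.prod (μ • LinearMap.id)

/-- The eigenspace `ker (T - μ)` of a partially defined operator, as a subspace of the whole
space; it is read off the graph of `T`, so that no membership in the domain is carried around. -/
def pmapEigenspace (T : E →ₗ.[R] E) (μ : R) : Submodule R E :=
  T.graph.comap (smulGraphMap μ)

/-- The range of `T - μ` for a partially defined operator `T`, read off the graph of `T`. -/
def pmapRangeSub (T : E →ₗ.[R] E) (μ : R) : Submodule R E :=
  T.graph.map (LinearMap.snd R E E - μ • LinearMap.fst R E E)

variable {A T : E →ₗ.[R] E} {μ : R}

theorem mem_pmapEigenspace_iff {x : E} :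
    x ∈ pmapEigenspace T μ ↔ ∃ hx : x ∈ T.domain, T ⟨x, hx⟩ = μ • x := by
  change (x, μ • x) ∈ T.graph ↔ _
  simp [LinearPMap.mem_graph_iff]

theorem pmapEigenspace_mono (h : A ≤ T) : pmapEigenspace A μ ≤ pmapEigenspace T μ :=
  Submodule.comap_mono (LinearPMap.le_graph_of_le h)

theorem graph_eq_graph_sup_map_pmapEigenspace (hAT : A ≤ T) (hA : pmapRangeSub A μ = ⊤) :
    T.graph = A.graph ⊔ (pmapEigenspace T μ).map (smulGraphMap μ) := by
  have hgraph : A.graph ≤ T.graph := LinearPMap.le_graph_of_le hAT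
  refine le_antisymm (fun p hp => ?_) (sup_le hgraph (Submodule.map_comap_le _ _))
  obtain ⟨q, hq, hqp⟩ : p.2 - μ • p.1 ∈ pmapRangeSub A μ := hA ▸ Submodule.mem_top
  have heigen : smulGraphMap μ (p - q).1 = p - q := by
    refine Prod.ext rfl ?_
    change q.2 - μ • q.1 = p.2 - μ • p.1 at hqp
    change μ • (p.1 - q.1) = p.2 - q.2
    linear_combination (norm := module) hqp
  refine Submodule.mem_sup.mpr ⟨q, hq, p - q, ⟨(p - q).1, ?_, heigen⟩, add_sub_cancel q p⟩
  exact heigen.symm ▸ T.graph.sub_mem hp (hgraph hq)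

theorem finiteDimensional_pmapEigenspace {K V : Type*} [Field K] [AddCommGroup V] [Module K V]
    {A T : V →ₗ.[K] V} {μ lam : K} (hAT : A ≤ T) (hrange : pmapRangeSub A μ = ⊤)
    (hker : pmapEigenspace A lam = ⊥) [FiniteDimensional K (pmapEigenspace T μ)] :
    FiniteDimensional K (pmapEigenspace T lam) := by
  refine finiteDimensional_of_comap_eq_bot_of_range_le_sup (p := A.graph)
    (q := (pmapEigenspace T μ).map (smulGraphMap μ))
    (f := smulGraphMap lam ∘ₗ (pmapEigenspace T lam).subtype) ?_ ?_
  · rw [Submodule.comap_comp]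
    change (pmapEigenspace A lam).comap _ = ⊥
    rw [hker, Submodule.comap_bot, Submodule.ker_subtype]
  · rw [← graph_eq_graph_sup_map_pmapEigenspace hAT hrange]
    rintro _ ⟨x, rfl⟩
    exact x.2

end LinearAlgebra

section Topology

theorem linearPMap_closure_eq_of_isClosed {R E F : Type*} [CommRing R] [TopologicalSpace R]
    [AddCommGroup E] [TopologicalSpace E] [ContinuousAdd E] [Module R E] [ContinuousSMul R E]
    [AddCommGroup F] [TopologicalSpace F] [ContinuousAdd F] [Module R F] [ContinuousSMul R F]
    {T : E →ₗ.[R] F} (hT : T.IsClosed) : T.closure = T := by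
  refine LinearPMap.eq_of_eq_graph ?_
  rw [← hT.isClosable.graph_closure_eq_closure_graph]
  exact hT.submodule_topologicalClosure_eq

variable {𝕜 E : Type*} [NontriviallyNormedField 𝕜] [CompleteSpace 𝕜]
  [AddCommGroup E] [TopologicalSpace E] [IsTopologicalAddGroup E] [Module 𝕜 E]
  [ContinuousSMul 𝕜 E]

theorem eq_top_of_dense_of_finiteDimensional [T2Space E] {p : Submodule 𝕜 E}
    [FiniteDimensional 𝕜 p] (hp : Dense (p : Set E)) : p = ⊤ := by
  rw [← p.closed_of_finiteDimensional.submodule_topologicalClosure_eq]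
  exact Submodule.dense_iff_topologicalClosure_eq_top.mp hp

theorem isClosed_of_finiteDimensional_pmapEigenspace {A T : E →ₗ.[𝕜] E} {μ : 𝕜}
    (hA : A.IsClosed) (hAT : A ≤ T) (hrange : pmapRangeSub A μ = ⊤)
    [FiniteDimensional 𝕜 (pmapEigenspace T μ)] : T.IsClosed := by
  rw [LinearPMap.IsClosed, graph_eq_graph_sup_map_pmapEigenspace hAT hrange]
  exact Submodule.isClosed_sup_finiteDimensional _ _ hA

end Topology

section Resolvent

theorem isClosed_pmapRangeSub {𝕜 E : Type*} [NontriviallyNormedField 𝕜] [NormedAddCommGroup E]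
    [NormedSpace 𝕜 E] [CompleteSpace E] {A : E →ₗ.[𝕜] E} (hA : A.IsClosed) {μ : 𝕜} {c : ℝ}
    (hc : 0 < c) (hbound : ∀ x : A.domain, c * ‖(x : E)‖ ≤ ‖A x - μ • (x : E)‖) :
    IsClosed (pmapRangeSub A μ : Set E) := by
  have : CompleteSpace A.graph := hA.completeSpace_coe
  let L : A.graph →L[𝕜] E :=
    (ContinuousLinearMap.snd 𝕜 E E - μ • ContinuousLinearMap.fst 𝕜 E E).comp A.graph.subtypeL
  have hL : AntilipschitzWith (Real.toNNReal (max c⁻¹ (1 + ‖μ‖ * c⁻¹))) L := by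
    refine L.antilipschitz_of_bound fun ⟨⟨a, b⟩, hab⟩ => ?_
    obtain ⟨x, rfl, rfl⟩ := A.mem_graph_iff.mp hab
    have hx : ‖(x : E)‖ ≤ c⁻¹ * ‖A x - μ • (x : E)‖ := (le_inv_mul_iff₀ hc).mpr (hbound x)
    have hAx : ‖A x‖ ≤ (1 + ‖μ‖ * c⁻¹) * ‖A x - μ • (x : E)‖ := calc
      ‖A x‖ ≤ ‖A x - μ • (x : E)‖ + ‖μ • (x : E)‖ := norm_le_norm_sub_add _ _
      _ ≤ ‖A x - μ • (x : E)‖ + ‖μ‖ * (c⁻¹ * ‖A x - μ • (x : E)‖) := by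
        rw [norm_smul]; gcongr
      _ = (1 + ‖μ‖ * c⁻¹) * ‖A x - μ • (x : E)‖ := by ring
    rw [Real.coe_toNNReal _ (by positivity)]
    change max ‖(x : E)‖ ‖A x‖ ≤ _ * ‖A x - μ • (x : E)‖
    rw [max_mul_of_nonneg _ _ (norm_nonneg _)]
    exact max_le_max hx hAx
  have hrange : Set.range L = pmapRangeSub A μ := by
    ext z
    simp [L, pmapRangeSub]
  exact hrange ▸ hL.isClosed_range L.uniformContinuous

theorem orthogonal_pmapRangeSub {𝕜 E : Type*} [RCLike 𝕜] [NormedAddCommGroup E]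
    [InnerProductSpace 𝕜 E] [CompleteSpace E] {A : E →ₗ.[𝕜] E}
    (hA : Dense (A.domain : Set E)) (μ : 𝕜) :
    (pmapRangeSub A μ)ᗮ = pmapEigenspace A.adjoint (conj μ) := by
  ext v
  change _ ↔ (v, conj μ • v) ∈ A.adjoint.graph
  rw [LinearPMap.adjoint_graph_eq_graph_adjoint hA, Submodule.mem_adjoint_iff,
    Submodule.mem_orthogonal]
  constructor
  · intro h a b hab
    simpa [inner_sub_left, inner_smul_left, inner_smul_right] using h _ ⟨(a, b), hab, rfl⟩
  · rintro h _ ⟨⟨a, b⟩, hab, rfl⟩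
    simpa [inner_sub_left, inner_smul_left, inner_smul_right] using h a b hab

variable {E : Type*} [NormedAddCommGroup E] [InnerProductSpace ℂ E] {A : E →ₗ.[ℂ] E} {μ : ℂ}

theorem abs_im_mul_norm_le_norm_sub_smul (hA : A.IsFormalAdjoint A) (μ : ℂ) (x : A.domain) :
    |μ.im| * ‖(x : E)‖ ≤ ‖A x - μ • (x : E)‖ := by
  have hreal : (⟪(x : E), A x⟫_ℂ).im = 0 := by
    rw [← Complex.conj_eq_iff_im, inner_conj_symm]
    exact hA x x
  have him : (⟪(x : E), A x - μ • (x : E)⟫_ℂ).im = -(μ.im * ‖(x : E)‖ ^ 2) := by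
    rw [inner_sub_right, inner_smul_right, inner_self_eq_norm_sq_to_K, Complex.sub_im, hreal,
      zero_sub, neg_inj]
    exact (congrArg Complex.im (by norm_cast)).trans (Complex.im_mul_ofReal μ (‖(x : E)‖ ^ 2))
  have hcauchy : ‖(x : E)‖ * (|μ.im| * ‖(x : E)‖) ≤ ‖(x : E)‖ * ‖A x - μ • (x : E)‖ := calc
    _ = |(⟪(x : E), A x - μ • (x : E)⟫_ℂ).im| := by
      rw [him, abs_neg, abs_mul, abs_sq]; ring
    _ ≤ ‖⟪(x : E), A x - μ • (x : E)⟫_ℂ‖ := Complex.abs_im_le_norm _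
    _ ≤ _ := norm_inner_le_norm _ _
  rcases (norm_nonneg (x : E)).eq_or_lt with hx | hx
  · simp [← hx]
  · exact le_of_mul_le_mul_left hcauchy hx

theorem pmapEigenspace_eq_bot_of_im_ne_zero (hA : A.IsFormalAdjoint A) (hμ : μ.im ≠ 0) :
    pmapEigenspace A μ = ⊥ := by
  refine (Submodule.eq_bot_iff _).mpr fun x hx => ?_
  obtain ⟨hxA, hAx⟩ := mem_pmapEigenspace_iff.mp hx
  have hbound := abs_im_mul_norm_le_norm_sub_smul hA μ ⟨x, hxA⟩
  rw [hAx, sub_self, norm_zero] at hbound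
  exact norm_le_zero_iff.mp (nonpos_of_mul_nonpos_right hbound (abs_pos.mpr hμ))

theorem pmapRangeSub_eq_top_of_isSelfAdjoint [CompleteSpace E] (hA : IsSelfAdjoint A)
    (hμ : μ.im ≠ 0) : pmapRangeSub A μ = ⊤ := by
  have hAadj : A.adjoint = A := LinearPMap.isSelfAdjoint_def.mp hA
  have hsymm : A.IsFormalAdjoint A := by
    simpa only [hAadj] using LinearPMap.adjoint_isFormalAdjoint hA.dense_domain
  have hclosed : IsClosed (pmapRangeSub A μ : Set E) :=
    isClosed_pmapRangeSub hA.isClosed (abs_pos.mpr hμ) (abs_im_mul_norm_le_norm_sub_smul hsymm μ)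
  have : CompleteSpace (pmapRangeSub A μ) := hclosed.completeSpace_coe
  rw [← Submodule.orthogonal_eq_bot_iff, orthogonal_pmapRangeSub hA.dense_domain, hAadj]
  exact pmapEigenspace_eq_bot_of_im_ne_zero hsymm (by simpa using hμ)

theorem coe_pmapEigenspace : (pmapEigenspace A μ : Set E) = kerAt A μ :=
  Set.ext fun _ => mem_pmapEigenspace_iff

theorem finiteDimensional_pmapEigenspace_of_spannedByFinitelyMany
    (h : SpannedByFinitelyMany (kerAt A μ)) : FiniteDimensional ℂ (pmapEigenspace A μ) := by
  obtain ⟨n, b, hb⟩ := h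
  have := FiniteDimensional.span_of_finite ℂ (Set.finite_range b)
  rw [← coe_pmapEigenspace] at hb
  exact Submodule.finiteDimensional_of_le hb

theorem pmapEigenspace_eq_bot_of_inResolventSet (h : InResolventSet A μ) :
    pmapEigenspace A μ = ⊥ := by
  obtain ⟨R, -, hR⟩ := h
  refine (Submodule.eq_bot_iff _).mpr fun x hx => ?_
  obtain ⟨hxA, hAx⟩ := mem_pmapEigenspace_iff.mp hx
  have hRx := hR ⟨x, hxA⟩
  rw [hAx, sub_self, map_zero] at hRx
  exact hRx.symm

end Resolvent

theorem statement4_general {𝕜 E F : Type*} [NontriviallyNormedField 𝕜] [CompleteSpace 𝕜]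
    [AddCommGroup E] [TopologicalSpace E] [IsTopologicalAddGroup E] [Module 𝕜 E]
    [ContinuousSMul 𝕜 E] [AddCommGroup F] [TopologicalSpace F] [IsTopologicalAddGroup F]
    [Module 𝕜 F] [ContinuousSMul 𝕜 F] [T2Space F]
    {A T B : E →ₗ.[𝕜] E} {μ lam₀ : 𝕜}
    (hA : A.IsClosed) (hAT : A ≤ T) (hTcl : T.closure = B)
    (hrange : pmapRangeSub A μ = ⊤) (hdef : FiniteDimensional 𝕜 (pmapEigenspace B μ))
    {F₀ : Submodule 𝕜 F} (hF₀ : Dense (F₀ : Set F))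
    {Γ₀ : F₀ →ₗ[𝕜] E} (hΓ₀inj : Function.Injective Γ₀)
    (hlam₀ : pmapEigenspace A lam₀ = ⊥) (hΓ₀ran : LinearMap.range Γ₀ ≤ pmapEigenspace T lam₀) :
    T = B ∧ FiniteDimensional 𝕜 F ∧ F₀ = ⊤ := by
  have : FiniteDimensional 𝕜 (pmapEigenspace T μ) :=
    Submodule.finiteDimensional_of_le (pmapEigenspace_mono (hTcl ▸ T.le_closure))
  have hT : T.IsClosed := isClosed_of_finiteDimensional_pmapEigenspace hA hAT hrange
  have := finiteDimensional_pmapEigenspace hAT hrange hlam₀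
  have hF₀fin : FiniteDimensional 𝕜 F₀ :=
    FiniteDimensional.of_injective (Γ₀.codRestrict _ fun g => hΓ₀ran ⟨g, rfl⟩)
      ((LinearMap.injective_codRestrict_iff ..).mpr hΓ₀inj)
  obtain rfl := eq_top_of_dense_of_finiteDimensional hF₀
  have hTB : T = B := (linearPMap_closure_eq_of_isClosed hT).symm.trans hTcl
  exact ⟨hTB, Submodule.topEquiv.finiteDimensional, rfl⟩

/-- Let `S` be a densely defined closed symmetric operator with finite deficiency
indices `n±(S) = dim ker(S* ∓ i) < ∞`, let `A` be a selfadjoint extension of `S` and let `T`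
satisfy `A ⊆ T ⊆ S*` with `T̄ = S*`, and let `Γ_{λ₀} : G₀ ⊆ G → H` be a densely defined bounded
injective operator with range `ker(T - λ₀)` (so that `dim G = dim ker(T - λ₀)`).  Then `T = S*`,
the space `G` is finite dimensional and `G₀ = G`; in particular any generalized `Q`-function of
`{S, A, T}` (whose values are defined on `G₀`) is an ordinary `Q`-function of the pair
`{S, A}`. -/
theorem statement4
    (S A T : H →ₗ.[ℂ] H)
    (hSdense : Dense (S.domain : Set H)) (hSclosed : S.IsClosed)
    (hSsym : ∀ f g : S.domain, ⟪S f, (g : H)⟫_ℂ = ⟪(f : H), S g⟫_ℂ)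
    (hA : IsSelfAdjoint A) (hSA : S ≤ A) (hAT : A ≤ T) (hTS : T ≤ S.adjoint)
    (hTcl : T.closure = S.adjoint)
    (hdefplus : SpannedByFinitelyMany (kerAt S.adjoint Complex.I))
    (hdefminus : SpannedByFinitelyMany (kerAt S.adjoint (-Complex.I)))
    (G₀ : Submodule ℂ G) (hG₀ : Dense (G₀ : Set G))
    (Γ₀ : G₀ →ₗ[ℂ] H) (C : ℝ) (hΓ₀bdd : ∀ g : G₀, ‖Γ₀ g‖ ≤ C * ‖(g : G)‖)
    (hΓ₀inj : Function.Injective Γ₀)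
    (lam₀ : ℂ) (hlam₀ : InResolventSet A lam₀)
    (hΓ₀ran : Set.range Γ₀ = kerAt T lam₀) :
    T = S.adjoint ∧ FiniteDimensional ℂ G ∧ G₀ = (⊤ : Submodule ℂ G) := by
  exact statement4_general hA.isClosed hAT hTcl
    (pmapRangeSub_eq_top_of_isSelfAdjoint hA (by simp))
    (finiteDimensional_pmapEigenspace_of_spannedByFinitelyMany hdefplus) hG₀ hΓ₀inj
    (pmapEigenspace_eq_bot_of_inResolventSet hlam₀)
    (hΓ₀ran.trans coe_pmapEigenspace.symm).subset
end
end

section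
/- If n = 2, then for all λ ∈ ρ(A_D) ∩ ρ(A_N) the trace formula tr((A_D − λ)⁻¹ − (A_N − λ)⁻¹) = tr( closure(Q(λ)⁻¹) · (d/dλ)Q̃(λ) ) holds, where Q̃ is the Nevanlinna function equal to the closure of Q(λ) − Re Q(λ₀). -/
open scoped InnerProductSpace ComplexConjugate

noncomputable section

variable {H B : Type*}
  [NormedAddCommGroup H] [InnerProductSpace ℂ H] [CompleteSpace H]
  [NormedAddCommGroup B] [InnerProductSpace ℂ B] [CompleteSpace B]

/-!
Let `R_D`, `R_N` be the resolvents at `λ` and let `S = -γ₁ R_D`. By Green's identity `S` is the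
adjoint of the Poisson operator at `conj λ`, hence bounded, and likewise the Poisson operator `Γ`
at `λ` is bounded. Krein's formula `R_D - R_N = Γ K S` and the derivative `D = S Γ` then turn the
two sides into the traces of `Γ (K S)` and `(K S) Γ`.

Only the two products are known to be trace class, so cyclicity of the trace is not immediate.
Summability of the diagonal along every Hilbert basis makes both products nuclear: for self-adjoint
operators use a basis adapted to the kernel of the negative part. For bounded `A`, `C` with `A C`
and `C A` nuclear, let `T_ε = (A† A + ε)⁻¹ A†`. Then `tr (A T_ε A C) = tr (T_ε A C A)` because
`T_ε A C` is nuclear and `A` is bounded. As `ε → 0`, the operators `A T_ε` and `T_ε A` converge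
strongly, with norms at most one, to the projections onto the closure of the range of `A` and onto
the orthogonal complement of its kernel; inserting these changes neither `A C` nor the trace of
`C A`.
-/

section Nuclear

open ContinuousLinearMap Filter Topology

universe w

variable {𝕜 E F G : Type*} [RCLike 𝕜]
  [NormedAddCommGroup E] [InnerProductSpace 𝕜 E] [NormedAddCommGroup F] [InnerProductSpace 𝕜 F]
  [NormedAddCommGroup G] [InnerProductSpace 𝕜 G]

/-- An absolutely convergent rank-one expansion `C x = ∑ ⟪u i, x⟫ • v i`. -/
structure IsNuclearRep {ι : Type*} (C : E →L[𝕜] F) (u : ι → E) (v : ι → F) : Prop where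
  summable : Summable fun i => ‖u i‖ * ‖v i‖
  hasSum : ∀ x, HasSum (fun i => ⟪u i, x⟫_𝕜 • v i) (C x)

/-- Nuclear operators, which between Hilbert spaces are the trace class operators. Asking for an
index set in `Type` is no restriction, because an absolutely convergent expansion has only countably
many nonzero terms. -/
def IsNuclear (C : E →L[𝕜] F) : Prop :=
  ∃ (ι : Type) (u : ι → E) (v : ι → F), IsNuclearRep C u v

namespace IsNuclearRep

variable {ι : Type*} {C : E →L[𝕜] F} {u : ι → E} {v : ι → F}

theorem isNuclear (h : IsNuclearRep C u v) : IsNuclear C := by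
  have hcountable := h.summable.countable_support
  set s := Function.support fun i => ‖u i‖ * ‖v i‖
  have : Small.{0} s := have := hcountable.to_subtype; Countable.toSmall s
  let σ : Shrink.{0} s ≃ s := (equivShrink s).symm
  have hsub (x : E) : (Function.support fun i => ⟪u i, x⟫_𝕜 • v i) ⊆ s := fun i hi hzero => hi <| by
    rcases mul_eq_zero.1 hzero with h0 | h0 <;> simp [norm_eq_zero.1 h0]
  exact ⟨Shrink s, fun k => u (σ k), fun k => v (σ k),
    σ.summable_iff.2 (h.summable.subtype s),
    fun x => σ.hasSum_iff.2 ((hasSum_subtype_iff_of_support_subset (hsub x)).2 (h.hasSum x))⟩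

theorem comp_left (h : IsNuclearRep C u v) (L : F →L[𝕜] G) :
    IsNuclearRep (L ∘L C) u (fun i => L (v i)) where
  summable := by
    refine (h.summable.mul_left ‖L‖).of_nonneg_of_le (fun i => by positivity) fun i => ?_
    calc ‖u i‖ * ‖L (v i)‖ ≤ ‖u i‖ * (‖L‖ * ‖v i‖) := by gcongr; exact L.le_opNorm _
      _ = ‖L‖ * (‖u i‖ * ‖v i‖) := by ring
  hasSum x := by simpa using L.hasSum (h.hasSum x)

theorem comp_right [CompleteSpace E] [CompleteSpace G] (h : IsNuclearRep C u v) (L : G →L[𝕜] E) :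
    IsNuclearRep (C ∘L L) (fun i => adjoint L (u i)) v where
  summable := by
    refine (h.summable.mul_left ‖adjoint L‖).of_nonneg_of_le (fun i => by positivity) fun i => ?_
    rw [← mul_assoc]
    gcongr
    exact (adjoint L).le_opNorm _
  hasSum x := by simpa [adjoint_inner_left] using h.hasSum (L x)

end IsNuclearRep

namespace IsNuclear

theorem add {C D : E →L[𝕜] F} (hC : IsNuclear C) (hD : IsNuclear D) : IsNuclear (C + D) := by
  obtain ⟨ι, u, v, h⟩ := hC
  obtain ⟨κ, p, q, k⟩ := hD
  exact ⟨ι ⊕ κ, Sum.elim u p, Sum.elim v q,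
    (HasSum.sum (f := fun i => ‖Sum.elim u p i‖ * ‖Sum.elim v q i‖)
      h.summable.hasSum k.summable.hasSum).summable,
    fun x => HasSum.sum (f := fun i => ⟪Sum.elim u p i, x⟫_𝕜 • Sum.elim v q i)
      (h.hasSum x) (k.hasSum x)⟩

theorem const_smul {C : E →L[𝕜] F} (hC : IsNuclear C) (c : 𝕜) : IsNuclear (c • C) := by
  obtain ⟨ι, u, v, h⟩ := hC
  exact ⟨ι, u, fun i => c • v i, by simpa using h.comp_left (c • ContinuousLinearMap.id 𝕜 F)⟩

theorem sub {C D : E →L[𝕜] F} (hC : IsNuclear C) (hD : IsNuclear D) : IsNuclear (C - D) := by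
  simpa [sub_eq_add_neg] using hC.add (hD.const_smul (-1))

end IsNuclear

theorem tsum_norm_inner_mul_inner_le {κ : Type*} (e : HilbertBasis κ 𝕜 E) (x y : E) :
    ∑' j, ‖⟪x, e j⟫_𝕜 * ⟪e j, y⟫_𝕜‖ ≤ ‖x‖ * ‖y‖ := by
  refine (e.summable_inner_mul_inner x y).norm.tsum_le_of_sum_le fun s => ?_
  calc ∑ j ∈ s, ‖⟪x, e j⟫_𝕜 * ⟪e j, y⟫_𝕜‖
      = ∑ j ∈ s, ‖⟪e j, x⟫_𝕜‖ * ‖⟪e j, y⟫_𝕜‖ := by simp only [norm_mul, norm_inner_symm x]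
    _ ≤ √(∑ j ∈ s, ‖⟪e j, x⟫_𝕜‖ ^ 2) * √(∑ j ∈ s, ‖⟪e j, y⟫_𝕜‖ ^ 2) :=
        Real.sum_mul_le_sqrt_mul_sqrt s _ _
    _ ≤ ‖x‖ * ‖y‖ := by
        gcongr <;>
        exact Real.sqrt_le_iff.2 ⟨norm_nonneg _, e.orthonormal.sum_inner_products_le _⟩

theorem IsNuclearRep.hasSum_inner_basis {ι κ : Type*} {C : E →L[𝕜] E} {u v : ι → E}
    (h : IsNuclearRep C u v) (e : HilbertBasis κ 𝕜 E) :
    HasSum (fun j => ⟪C (e j), e j⟫_𝕜) (∑' i, ⟪v i, u i⟫_𝕜) := by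
  have hsummable : Summable fun p : ι × κ => ⟪v p.1, e p.2⟫_𝕜 * ⟪e p.2, u p.1⟫_𝕜 := by
    refine Summable.of_norm ((summable_prod_of_nonneg fun _ => norm_nonneg _).2
      ⟨fun i => (e.summable_inner_mul_inner (v i) (u i)).norm,
        h.summable.of_nonneg_of_le (fun i => tsum_nonneg fun j => norm_nonneg _) fun i => ?_⟩)
    exact (tsum_norm_inner_mul_inner_le e (v i) (u i)).trans_eq (mul_comm _ _)
  have hrows : HasSum (fun p : ι × κ => ⟪v p.1, e p.2⟫_𝕜 * ⟪e p.2, u p.1⟫_𝕜)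
      (∑' i, ⟪v i, u i⟫_𝕜) := by
    convert hsummable.hasSum using 1
    rw [hsummable.tsum_prod]
    exact tsum_congr fun i => (e.tsum_inner_mul_inner _ _).symm
  refine ((Equiv.prodComm κ ι).hasSum_iff.2 hrows).prod_fiberwise fun j => ?_
  have hstar := (innerSL 𝕜 (e j)).hasSum (h.hasSum (e j)) |>.star
  simpa [inner_smul_right, mul_comm] using hstar

theorem IsNuclearRep.tendsto_tsum_inner {ι α : Type*} {l : Filter α} {C : E →L[𝕜] E} {u v : ι → E}
    (h : IsNuclearRep C u v) {L : α → E →L[𝕜] E} {M : E → E} {c : ℝ}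
    (hbound : ∀ n x, ‖L n x‖ ≤ c * ‖x‖) (hlim : ∀ x, Tendsto (fun n => L n x) l (𝓝 (M x))) :
    Tendsto (fun n => ∑' i, ⟪L n (v i), u i⟫_𝕜) l (𝓝 (∑' i, ⟪M (v i), u i⟫_𝕜)) := by
  refine tendsto_tsum_of_dominated_convergence (h.summable.mul_left c)
    (fun i => (hlim (v i)).inner tendsto_const_nhds) (Eventually.of_forall fun n i => ?_)
  calc ‖⟪L n (v i), u i⟫_𝕜‖ ≤ ‖L n (v i)‖ * ‖u i‖ := norm_inner_le_norm _ _
    _ ≤ c * ‖v i‖ * ‖u i‖ := by gcongr; exact hbound n _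
    _ = c * (‖u i‖ * ‖v i‖) := by ring

theorem small_of_hilbertBasis {ι : Type w} {κ : Type*} (e : HilbertBasis ι 𝕜 E)
    (b : HilbertBasis κ 𝕜 E) : Small.{w} κ := by
  have hcover : (⋃ i, {j | ⟪e i, b j⟫_𝕜 ≠ 0}) = Set.univ := by
    refine Set.eq_univ_of_forall fun j => Set.mem_iUnion.2 ?_
    by_contra! hzero
    refine b.orthonormal.ne_zero j (e.repr.injective (lp.ext (funext fun i => ?_)))
    simpa [e.repr_apply_apply] using hzero i
  have hsmall (i : ι) : Small.{w} {j | ⟪e i, b j⟫_𝕜 ≠ 0} := by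
    have : Countable {j | ⟪e i, b j⟫_𝕜 ≠ 0} :=
      (b.summable_inner_mul_inner (e i) (e i)).countable_support.mono fun j hj =>
        mul_ne_zero hj (mt inner_eq_zero_symm.1 hj)
    exact Countable.toSmall _
  rw [← small_univ_iff, ← hcover]
  infer_instance

theorem mem_orthogonal_iff_forall_hilbertBasis {ι : Type*} {V : Submodule 𝕜 E}
    (c : HilbertBasis ι 𝕜 V) {x : E} : x ∈ Vᗮ ↔ ∀ i, ⟪(c i : E), x⟫_𝕜 = 0 := by
  refine ⟨fun hx i => hx _ (c i).2, fun hx y hy => ?_⟩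
  have hsum := ((innerSL 𝕜 x).comp V.subtypeL).hasSum (c.hasSum_repr ⟨y, hy⟩)
  have hzero (i : ι) : ⟪x, (c i : E)⟫_𝕜 = 0 := inner_eq_zero_symm.1 (hx i)
  refine inner_eq_zero_symm.1 (hsum.unique ?_)
  simp [hzero]

theorem exists_hilbertBasis_mem_or_mem_orthogonal [CompleteSpace E] {ι : Type w}
    (e : HilbertBasis ι 𝕜 E) (V : Submodule 𝕜 E) [CompleteSpace V] :
    ∃ (κ : Type w) (b : HilbertBasis κ 𝕜 E), ∀ j, b j ∈ V ∨ b j ∈ Vᗮ := by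
  obtain ⟨s, c, -⟩ := exists_hilbertBasis 𝕜 V
  obtain ⟨t, b, hst, hb⟩ :=
    (c.orthonormal.comp_linearIsometry V.subtypeₗᵢ).toSubtypeRange.exists_hilbertBasis_extension
  have hmem (j : t) : b j ∈ V ∨ b j ∈ Vᗮ := by
    refine or_iff_not_imp_left.2 fun hj => (mem_orthogonal_iff_forall_hilbertBasis c).2 fun i => ?_
    have hij : (⟨c i, hst ⟨i, rfl⟩⟩ : t) ≠ j := fun h => hj (by rw [hb, ← h]; exact (c i).2)
    simpa [hb] using b.orthonormal.2 hij
  have := small_of_hilbertBasis e b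
  let σ : Shrink.{w} t ≃ t := (equivShrink t).symm
  refine ⟨Shrink t, HilbertBasis.mk (b.orthonormal.comp σ σ.injective) ?_, fun k => ?_⟩
  · rw [σ.surjective.range_comp, b.dense_span]
  · simpa using hmem (σ k)

end Nuclear

section SummableDiagonal

open ContinuousLinearMap

universe w

variable {E : Type*} [NormedAddCommGroup E] [InnerProductSpace ℂ E] [CompleteSpace E]

theorem isNuclear_of_nonneg {κ : Type*} {P : E →L[ℂ] E} (hP : 0 ≤ P) (b : HilbertBasis κ ℂ E)
    (hb : Summable fun j => ⟪P (b j), b j⟫_ℂ) : IsNuclear P := by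
  have hsq (x : E) : CFC.sqrt P (CFC.sqrt P x) = P x :=
    congr($(CFC.sqrt_mul_sqrt_self P hP) x)
  have hsymm (x y : E) : ⟪CFC.sqrt P x, y⟫_ℂ = ⟪x, CFC.sqrt P y⟫_ℂ :=
    (CFC.sqrt_nonneg P).isSelfAdjoint.isSymmetric x y
  refine IsNuclearRep.isNuclear (u := fun j => CFC.sqrt P (b j)) (v := fun j => CFC.sqrt P (b j))
    ⟨(Complex.reCLM.summable hb).congr fun j => ?_, fun x => ?_⟩
  · rw [← hsq, hsymm, inner_self_eq_norm_sq_to_K, ← sq]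
    simp [← Complex.ofReal_pow]
  · simpa [hsq, hsymm, HilbertBasis.repr_apply_apply] using
      (CFC.sqrt P).hasSum (b.hasSum_repr (CFC.sqrt P x))

variable {ι : Type w} {C : E →L[ℂ] E}

theorem isNuclear_posPart_of_summable_diagonal (e : HilbertBasis ι ℂ E) (hC : IsSelfAdjoint C)
    (h : ∀ (κ : Type w) (b : HilbertBasis κ ℂ E), Summable fun j => ⟪C (b j), b j⟫_ℂ) :
    IsNuclear C⁺ := by
  have hsub (x : E) : C x = C⁺ x - C⁻ x := congr($((CFC.posPart_sub_negPart C hC).symm) x)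
  have hmul (x : E) : C⁻ (C⁺ x) = 0 := congr($(CFC.negPart_mul_posPart C) x)
  have : CompleteSpace C⁻.ker := C⁻.isClosed_ker.completeSpace_coe
  obtain ⟨κ, b, hb⟩ := exists_hilbertBasis_mem_or_mem_orthogonal e C⁻.ker
  refine isNuclear_of_nonneg (CFC.posPart_nonneg C) b
    (Summable.of_norm ((h κ b).norm.of_nonneg_of_le (fun _ => norm_nonneg _) fun j => ?_))
  rcases hb j with hj | hj
  · have hzero : C⁻ (b j) = 0 := hj
    rw [hsub, hzero, sub_zero]
  · have hzero : ⟪C⁺ (b j), b j⟫_ℂ = 0 := hj _ (hmul _)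
    rw [hzero, norm_zero]
    exact norm_nonneg _

theorem isNuclear_of_isSelfAdjoint_of_summable_diagonal (e : HilbertBasis ι ℂ E)
    (hC : IsSelfAdjoint C)
    (h : ∀ (κ : Type w) (b : HilbertBasis κ ℂ E), Summable fun j => ⟪C (b j), b j⟫_ℂ) :
    IsNuclear C := by
  rw [← CFC.posPart_sub_negPart C hC]
  refine (isNuclear_posPart_of_summable_diagonal e hC h).sub ?_
  rw [← CFC.posPart_neg]
  exact isNuclear_posPart_of_summable_diagonal e hC.neg fun κ b => by simpa using (h κ b).neg

theorem isNuclear_of_summable_diagonal (e : HilbertBasis ι ℂ E)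
    (h : ∀ (κ : Type w) (b : HilbertBasis κ ℂ E), Summable fun j => ⟪C (b j), b j⟫_ℂ) :
    IsNuclear C := by
  have hstar (κ : Type w) (b : HilbertBasis κ ℂ E) :
      Summable fun j => ⟪star C (b j), b j⟫_ℂ := by
    refine (Complex.conjCLE.summable.2 (h κ b)).congr fun j => ?_
    simp [star_eq_adjoint, adjoint_inner_left]
  rw [← realPart_add_I_smul_imaginaryPart C]
  refine IsNuclear.add ?_ (IsNuclear.const_smul ?_ _)
  · refine isNuclear_of_isSelfAdjoint_of_summable_diagonal e (realPart C).2 fun κ b => ?_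
    rw [realPart_apply_coe]
    refine (((h κ b).add (hstar κ b)).mul_left (2⁻¹ : ℂ)).congr fun j => ?_
    simp [← Complex.coe_smul, mul_comm, mul_add]
  · refine isNuclear_of_isSelfAdjoint_of_summable_diagonal e (imaginaryPart C).2 fun κ b => ?_
    rw [imaginaryPart_apply_coe]
    refine (((h κ b).sub (hstar κ b)).mul_left (Complex.I * 2⁻¹)).congr fun j => ?_
    simp [inner_smul_left, inner_sub_left, ← Complex.coe_smul, Complex.conj_ofNat]
    ring

end SummableDiagonal

section Tikhonov

open ContinuousLinearMap Filter Topology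

variable {𝕜 E F : Type*} [RCLike 𝕜]
  [NormedAddCommGroup E] [InnerProductSpace 𝕜 E] [CompleteSpace E]
  [NormedAddCommGroup F] [InnerProductSpace 𝕜 F]

theorem apply_starProjection_orthogonal_ker (A : E →L[𝕜] F) (x : E) :
    A (A.kerᗮ.starProjection x) = A x := by
  have hker : x - A.kerᗮ.starProjection x ∈ A.ker := by
    have := A.isClosed_ker.completeSpace_coe
    simp
  exact (sub_eq_zero.1 ((map_sub A x _).symm.trans hker)).symm

variable [CompleteSpace F]

/-- The Tikhonov regularization `(A† A + ε)⁻¹ A†` of the inverse of `A`, where `A†` is the adjoint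
of `A`. The ring inverse is a true inverse for `ε > 0`. -/
def tikhonovInverse (A : E →L[𝕜] F) (ε : ℝ) : F →L[𝕜] E :=
  Ring.inverse (adjoint A ∘L A + (ε : 𝕜) • 1) ∘L adjoint A

theorem isUnit_adjoint_comp_self_add_smul_one (A : E →L[𝕜] F) {ε : ℝ} (hε : 0 < ε) :
    IsUnit (adjoint A ∘L A + (ε : 𝕜) • (1 : E →L[𝕜] E)) := by
  lift ε to NNReal using hε.le
  refine isUnit_of_forall_le_norm_inner_map _ (c := ε) hε fun x => ?_
  have hinner : ⟪(adjoint A ∘L A + ((ε : ℝ) : 𝕜) • 1) x, x⟫_𝕜 =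
      ((‖A x‖ ^ 2 + ε * ‖x‖ ^ 2 : ℝ) : 𝕜) := by
    simp [inner_add_left, inner_smul_left, adjoint_inner_left, inner_self_eq_norm_sq_to_K]
  rw [hinner, RCLike.norm_ofReal, abs_of_nonneg (by positivity)]
  nlinarith [sq_nonneg ‖A x‖]

variable (A : E →L[𝕜] F) {ε : ℝ}

theorem adjoint_apply_tikhonovInverse_add (hε : 0 < ε) (y : F) :
    adjoint A (A (tikhonovInverse A ε y)) + (ε : 𝕜) • tikhonovInverse A ε y = adjoint A y :=
  congr($(Ring.mul_inverse_cancel _ (isUnit_adjoint_comp_self_add_smul_one A hε)) (adjoint A y))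

variable {A} in
theorem eq_tikhonovInverse (hε : 0 < ε) {x : E} {y : F}
    (h : adjoint A (A x) + (ε : 𝕜) • x = adjoint A y) : x = tikhonovInverse A ε y := by
  have hinv := congr($(Ring.inverse_mul_cancel _ (isUnit_adjoint_comp_self_add_smul_one A hε)) x)
  rw [tikhonovInverse, comp_apply, ← h]
  exact hinv.symm

theorem apply_tikhonovInverse (hε : 0 < ε) (y : F) :
    A (tikhonovInverse A ε y) = tikhonovInverse (adjoint A) ε (adjoint A y) := by
  refine eq_tikhonovInverse hε ?_
  rw [adjoint_adjoint, ← map_smul, ← map_add, adjoint_apply_tikhonovInverse_add A hε]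

theorem norm_tikhonovInverse_apply_le (hε : 0 < ε) (x : E) :
    ‖tikhonovInverse A ε (A x)‖ ≤ ‖x‖ := by
  set y := tikhonovInverse A ε (A x)
  have hy : adjoint A (A (x - y)) = (ε : 𝕜) • y := by
    rw [map_sub, map_sub, ← adjoint_apply_tikhonovInverse_add A hε (A x), add_sub_cancel_left]
  have hinner : ‖A (x - y)‖ ^ 2 = ε * (RCLike.re ⟪y, x⟫_𝕜 - ‖y‖ ^ 2) := by
    rw [← inner_self_eq_norm_sq (𝕜 := 𝕜), ← adjoint_inner_left, hy, inner_smul_left,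
      RCLike.conj_ofReal, RCLike.re_ofReal_mul, inner_sub_right, map_sub,
      inner_self_eq_norm_sq (𝕜 := 𝕜)]
  have hsq : ‖y‖ * ‖y‖ ≤ ‖y‖ * ‖x‖ := by
    nlinarith [nonneg_of_mul_nonneg_right (hinner ▸ sq_nonneg ‖A (x - y)‖) hε,
      re_inner_le_norm (𝕜 := 𝕜) y x]
  rcases (norm_nonneg y).eq_or_lt with hzero | hpos
  · exact hzero ▸ norm_nonneg x
  · exact le_of_mul_le_mul_left hsq hpos

theorem norm_tikhonovInverse_apply_adjoint_comp_self_sub_le (hε : 0 < ε) (x : E) :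
    ‖tikhonovInverse A ε (A (adjoint A (A x))) - adjoint A (A x)‖ ≤ ε * ‖x‖ := by
  set y := tikhonovInverse A ε (A x)
  have hy : adjoint A (A y) + (ε : 𝕜) • y = adjoint A (A x) :=
    adjoint_apply_tikhonovInverse_add A hε (A x)
  have hcomm : adjoint A (A y) = tikhonovInverse A ε (A (adjoint A (A x))) :=
    eq_tikhonovInverse hε (by rw [← hy]; simp only [map_add, map_smul])
  rw [← hcomm, ← hy, sub_add_cancel_left, norm_neg, norm_smul, RCLike.norm_ofReal, abs_of_pos hε]
  gcongr
  exact norm_tikhonovInverse_apply_le A hε x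

variable {α : Type*} {l : Filter α} {δ : α → ℝ}

theorem tendsto_tikhonovInverse_apply_of_mem_orthogonal_ker (hpos : ∀ n, 0 < δ n)
    (hδ : Tendsto δ l (𝓝 0)) {x : E} (hx : x ∈ A.kerᗮ) :
    Tendsto (fun n => tikhonovInverse A (δ n) (A x)) l (𝓝 x) := by
  have hequi : Equicontinuous fun n x => tikhonovInverse A (δ n) (A x) :=
    (LipschitzWith.uniformEquicontinuous _ 1 fun n =>
      AddMonoidHomClass.lipschitz_of_bound_nnnorm (tikhonovInverse A (δ n) ∘L A) 1 fun x => by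
        simpa [← NNReal.coe_le_coe] using norm_tikhonovInverse_apply_le A (hpos n) x).equicontinuous
  rw [← ker_adjoint_comp_self, orthogonal_ker, adjoint_comp, adjoint_adjoint] at hx
  refine closure_minimal ?_ (hequi.isClosed_setOfPred_tendsto continuous_id) hx
  rintro _ ⟨y, rfl⟩
  refine tendsto_iff_norm_sub_tendsto_zero.2 <| squeeze_zero (fun n => norm_nonneg _)
    (fun n => norm_tikhonovInverse_apply_adjoint_comp_self_sub_le A (hpos n) y) ?_
  simpa using hδ.mul_const ‖y‖

theorem starProjection_orthogonal_ker_adjoint_apply (x : E) :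
    (adjoint A).kerᗮ.starProjection (A x) = A x := by
  rw [Submodule.starProjection_eq_self_iff, orthogonal_ker, adjoint_adjoint]
  exact subset_closure ⟨x, rfl⟩

theorem tendsto_tikhonovInverse_apply (hpos : ∀ n, 0 < δ n) (hδ : Tendsto δ l (𝓝 0)) (x : E) :
    Tendsto (fun n => tikhonovInverse A (δ n) (A x)) l (𝓝 (A.kerᗮ.starProjection x)) := by
  rw [← apply_starProjection_orthogonal_ker A x]
  exact tendsto_tikhonovInverse_apply_of_mem_orthogonal_ker A hpos hδ
    (Submodule.starProjection_apply_mem _ x)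

theorem tsum_inner_comp_comm {A : F →L[𝕜] E} {C : E →L[𝕜] F} (hAC : IsNuclear (A ∘L C))
    (hCA : IsNuclear (C ∘L A)) {ι κ : Type*} (e : HilbertBasis ι 𝕜 E) (f : HilbertBasis κ 𝕜 F) :
    ∑' i, ⟪A (C (e i)), e i⟫_𝕜 = ∑' j, ⟪C (A (f j)), f j⟫_𝕜 := by
  obtain ⟨α, u, v, huv⟩ := hAC
  obtain ⟨β, p, q, hpq⟩ := hCA
  let δ (n : ℕ) : ℝ := 1 / ((n : ℝ) + 1)
  have hpos (n : ℕ) : 0 < δ n := Nat.one_div_pos_of_nat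
  have hδ : Tendsto δ atTop (𝓝 0) := tendsto_one_div_add_atTop_nhds_zero_nat
  have hregular (n : ℕ) : ∑' i, ⟪A (tikhonovInverse A (δ n) (v i)), u i⟫_𝕜 =
      ∑' i, ⟪tikhonovInverse A (δ n) (A (q i)), p i⟫_𝕜 := by
    have hleft := ((huv.comp_left (tikhonovInverse A (δ n))).comp_right A).hasSum_inner_basis f
    have hright := (hpq.comp_left (tikhonovInverse A (δ n) ∘L A)).hasSum_inner_basis f
    simpa only [adjoint_inner_right, comp_apply] using hleft.unique hright
  have hlimAC := huv.tendsto_tsum_inner (c := 1)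
    (L := fun n => tikhonovInverse (adjoint A) (δ n) ∘L adjoint A)
    (fun n x => by simpa using norm_tikhonovInverse_apply_le (adjoint A) (hpos n) x)
    (tendsto_tikhonovInverse_apply (adjoint A) hpos hδ)
  have hlimCA := hpq.tendsto_tsum_inner (c := 1) (L := fun n => tikhonovInverse A (δ n) ∘L A)
    (fun n x => by simpa using norm_tikhonovInverse_apply_le A (hpos n) x)
    (tendsto_tikhonovInverse_apply A hpos hδ)
  simp only [comp_apply, ← apply_tikhonovInverse _ (hpos _), hregular] at hlimAC hlimCA
  have htraceAC := (huv.comp_left (adjoint A).kerᗮ.starProjection).hasSum_inner_basis e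
  have htraceCA := (hpq.comp_right A.kerᗮ.starProjection).hasSum_inner_basis f
  simp only [comp_apply, starProjection_orthogonal_ker_adjoint_apply,
    apply_starProjection_orthogonal_ker, adjoint_inner_right] at htraceAC htraceCA
  rw [htraceAC.tsum_eq, htraceCA.tsum_eq, tendsto_nhds_unique hlimAC hlimCA]

end Tikhonov

section Resolvent

open ContinuousLinearMap Filter Topology
open scoped InnerProduct

theorem eventually_isUnit_one_sub_smul {𝕜 R : Type*} [NormedField 𝕜] [NormedRing R]
    [NormedAlgebra 𝕜 R] [HasSummableGeomSeries R] (a : R) (z : 𝕜) :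
    ∀ᶠ w in 𝓝 z, IsUnit (1 - (w - z) • a) := by
  have hcont : Continuous fun w : 𝕜 => 1 - (w - z) • a := by fun_prop
  exact hcont.continuousAt.eventually (Units.isOpen.mem_nhds (by simp))

theorem tendsto_inverse_one_sub_smul {𝕜 R : Type*} [NormedField 𝕜] [NormedRing R]
    [NormedAlgebra 𝕜 R] [HasSummableGeomSeries R] (a : R) (z : 𝕜) :
    Tendsto (fun w => Ring.inverse (1 - (w - z) • a)) (𝓝 z) (𝓝 1) := by
  have hcont : Continuous fun w : 𝕜 => 1 - (w - z) • a := by fun_prop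
  have hinv := NormedRing.inverse_continuousAt (1 : Rˣ)
  rw [ContinuousAt, Units.val_one, Ring.inverse_one] at hinv
  exact hinv.comp (by simpa using hcont.tendsto z)

variable {E F : Type*} [NormedAddCommGroup E] [InnerProductSpace ℂ E]
  [NormedAddCommGroup F] [InnerProductSpace ℂ F]

namespace IsResolventAt

variable {A : E →ₗ.[ℂ] E} {z w : ℂ} {R : E →L[ℂ] E}

theorem adjoint [CompleteSpace E] (hA : IsSelfAdjoint A) (hR : IsResolventAt A z R) :
    IsResolventAt A (conj z) (R†) := by
  have hformal := LinearPMap.adjoint_isFormalAdjoint hA.dense_domain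
  rw [LinearPMap.isSelfAdjoint_def.1 hA] at hformal
  refine ⟨fun x => ?_, fun x => ext_inner_right ℂ fun y => ?_⟩
  · have hinner (y : A.domain) :
        ⟪x + conj z • (R†) x, (y : E)⟫_ℂ = ⟪(R†) x, A y⟫_ℂ := by
      have hRy : ⟪(R†) x, A y - z • (y : E)⟫_ℂ = ⟪x, (y : E)⟫_ℂ := by
        rw [adjoint_inner_left, hR.2 y]
      rw [inner_sub_right, inner_smul_right, sub_eq_iff_eq_add] at hRy
      rw [inner_add_left, inner_smul_left, Complex.conj_conj, hRy]
    have hgraph : ((R†) x, x + conj z • (R†) x) ∈ A.graph := by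
      have hmem := A.mem_adjoint_domain_of_exists ((R†) x) ⟨_, hinner⟩
      rw [← LinearPMap.isSelfAdjoint_def.1 hA, LinearPMap.mem_graph_iff]
      exact ⟨⟨_, hmem⟩, rfl, LinearPMap.adjoint_apply_eq hA.dense_domain _ hinner⟩
    obtain ⟨⟨y, hy⟩, rfl, hAy⟩ := (LinearPMap.mem_graph_iff _).1 hgraph
    exact ⟨hy, sub_eq_of_eq_add hAy⟩
  · obtain ⟨hy, hAy⟩ := hR.1 y
    calc ⟪(R†) (A x - conj z • (x : E)), y⟫_ℂ
        = ⟪A x, R y⟫_ℂ - z * ⟪(x : E), R y⟫_ℂ := by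
          rw [adjoint_inner_left, inner_sub_left, inner_smul_left, Complex.conj_conj]
      _ = ⟪(x : E), A ⟨R y, hy⟩ - z • R y⟫_ℂ := by
          rw [hformal x ⟨R y, hy⟩, inner_sub_right, inner_smul_right]
      _ = ⟪(x : E), y⟫_ℂ := by rw [hAy]

theorem mul_inverse (hR : IsResolventAt A z R) (hw : IsUnit (1 - (w - z) • R)) :
    IsResolventAt A w (R * Ring.inverse (1 - (w - z) • R)) := by
  set J := Ring.inverse (1 - (w - z) • R)
  have hright (x : E) : J x - (w - z) • R (J x) = x := congr($(Ring.mul_inverse_cancel _ hw) x)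
  have hleft (x : E) : J (x - (w - z) • R x) = x := congr($(Ring.inverse_mul_cancel _ hw) x)
  have hcomm (x : E) : R (J x) = J (R x) := by
    rw [← hleft (R (J x)), ← map_smul, ← map_sub, hright]
  refine ⟨fun x => ?_, fun x => ?_⟩
  · obtain ⟨hx, hAx⟩ := hR.1 (J x)
    refine ⟨hx, ?_⟩
    calc A ⟨R (J x), hx⟩ - w • R (J x)
        = (A ⟨R (J x), hx⟩ - z • R (J x)) - (w - z) • R (J x) := by module
      _ = x := by rw [hAx, hright]
  · have hRx : R (A x - w • (x : E)) = x - (w - z) • R x := by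
      calc R (A x - w • (x : E)) = R (A x - z • (x : E)) - (w - z) • R x := by
            rw [← map_smul, ← map_sub]
            congr 1
            module
        _ = x - (w - z) • R x := by rw [hR.2]
    change R (J _) = x
    rw [hcomm, hRx, hleft]

end IsResolventAt

/-- `A` is the restriction of `T` to the kernel of the boundary map `γ`. -/
def IsKerRestriction (T : E →ₗ.[ℂ] E) (γ : T.domain →ₗ[ℂ] F) (A : E →ₗ.[ℂ] E) : Prop :=
  ∀ x y : E, (x, y) ∈ A.graph ↔ ∃ hx : x ∈ T.domain, γ ⟨x, hx⟩ = 0 ∧ T ⟨x, hx⟩ = y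

/-- The second Green identity for the operator `T` with boundary maps `γ` and `γ'`. -/
def SatisfiesGreen (T : E →ₗ.[ℂ] E) (γ γ' : T.domain →ₗ[ℂ] F) : Prop :=
  ∀ f g : T.domain, ⟪T f, (g : E)⟫_ℂ - ⟪(f : E), T g⟫_ℂ = ⟪γ f, γ' g⟫_ℂ - ⟪γ' f, γ g⟫_ℂ

/-- A bounded solution operator of the boundary value problem `T f = z f`, `γ f = φ`. -/
def IsGammaField (T : E →ₗ.[ℂ] E) (γ : T.domain →ₗ[ℂ] F) (z : ℂ) (Γ : F →L[ℂ] E) : Prop :=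
  ∀ f : T.domain, T f = z • (f : E) → Γ (γ f) = f

variable {T A A' : E →ₗ.[ℂ] E} {γ γ' : T.domain →ₗ[ℂ] F} {R R' : E →L[ℂ] E} {z w : ℂ}

namespace IsKerRestriction

theorem exists_mem_domain (hA : IsKerRestriction T γ A) (hR : IsResolventAt A z R) (x : E) :
    ∃ hx : R x ∈ T.domain, γ ⟨R x, hx⟩ = 0 ∧ T ⟨R x, hx⟩ = x + z • R x := by
  obtain ⟨hx, hAx⟩ := hR.1 x
  rw [← hA, ← sub_eq_iff_eq_add.1 hAx]
  exact A.mem_graph ⟨R x, hx⟩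

/-- The resolvent of `A` as a map into the domain of the larger operator `T`. -/
def resolventLift (hA : IsKerRestriction T γ A) (hR : IsResolventAt A z R) : E →ₗ[ℂ] T.domain :=
  R.toLinearMap.codRestrict T.domain fun x => (hA.exists_mem_domain hR x).1

section

variable (hA : IsKerRestriction T γ A) (hR : IsResolventAt A z R)

theorem coe_resolventLift (x : E) : (hA.resolventLift hR x : E) = R x := rfl

theorem map_resolventLift (x : E) : γ (hA.resolventLift hR x) = 0 :=
  (hA.exists_mem_domain hR x).2.1

theorem apply_resolventLift (x : E) : T (hA.resolventLift hR x) = x + z • R x :=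
  (hA.exists_mem_domain hR x).2.2

theorem resolventLift_apply_sub_smul {f : T.domain} (hf : γ f = 0) :
    hA.resolventLift hR (T f - z • (f : E)) = f := by
  obtain ⟨a, haf : (a : E) = f, hAa : A a = T f⟩ :=
    (LinearPMap.mem_graph_iff _).1 ((hA f (T f)).2 ⟨f.2, hf, rfl⟩)
  exact Subtype.ext (by rw [coe_resolventLift, ← hAa, ← haf, hR.2])

/-- The map `-γ' (A - z)⁻¹`. For the Dirichlet realization and the normal derivative `γ'` it is
the adjoint of the Poisson operator at the conjugate of `z`. -/
def resolventTrace (γ' : T.domain →ₗ[ℂ] F) : E →ₗ[ℂ] F :=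
  -(γ' ∘ₗ hA.resolventLift hR)

theorem inner_resolventTrace (hT : SatisfiesGreen T γ γ') {f : T.domain}
    (hf : T f = conj z • (f : E)) (x : E) :
    ⟪γ f, hA.resolventTrace hR γ' x⟫_ℂ = ⟪(f : E), x⟫_ℂ := by
  have hgreen := hT f (hA.resolventLift hR x)
  rw [hf, apply_resolventLift, map_resolventLift, coe_resolventLift, inner_smul_left,
    inner_add_right, inner_smul_right, inner_zero_right, Complex.conj_conj] at hgreen
  rw [resolventTrace, LinearMap.neg_apply, LinearMap.comp_apply, inner_neg_right]
  linear_combination hgreen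

theorem resolventLift_smul_eigenvector {f g : T.domain} (hf : T f = w • (f : E))
    (hg : T g = z • (g : E)) (hfg : γ f = γ g) :
    hA.resolventLift hR ((w - z) • (f : E)) = f - g := by
  rw [← hA.resolventLift_apply_sub_smul hR (f := f - g) (by rw [map_sub, hfg, sub_self]),
    T.map_sub, hf, hg, AddSubgroupClass.coe_sub]
  congr 1
  module

end

theorem exists_eigenvector (hA : IsKerRestriction T γ A) (hR : IsResolventAt A z R)
    (f : T.domain) : ∃ g : T.domain, T g = z • (g : E) ∧ γ g = γ f := by
  refine ⟨f - hA.resolventLift hR (T f - z • (f : E)), ?_, ?_⟩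
  · rw [T.map_sub, apply_resolventLift, AddSubgroupClass.coe_sub, coe_resolventLift, smul_sub]
    abel
  · rw [map_sub, map_resolventLift, sub_zero]

theorem continuous_resolventTrace [CompleteSpace E] [CompleteSpace F]
    (hA : IsKerRestriction T γ A) (hR : IsResolventAt A z R) (hR' : IsResolventAt A (conj z) R')
    (hT : SatisfiesGreen T γ γ') (hγ : DenseRange γ) :
    Continuous (hA.resolventTrace hR γ') := by
  refine LinearMap.continuous_of_seq_closed_graph _ fun s x y hs hy => ?_
  refine hγ.eq_of_inner_right ℂ fun h => ?_
  obtain ⟨f, hf, hfh⟩ := hA.exists_eigenvector hR' h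
  rw [← hfh, hA.inner_resolventTrace hR hT hf]
  refine tendsto_nhds_unique (tendsto_const_nhds.inner hy) ?_
  simp only [Function.comp_apply, hA.inner_resolventTrace hR hT hf]
  exact tendsto_const_nhds.inner hs

theorem exists_isGammaField [CompleteSpace E] [CompleteSpace F]
    (hA : IsKerRestriction T γ A) (hR : IsResolventAt A z R) (hR' : IsResolventAt A (conj z) R')
    (hT : SatisfiesGreen T γ γ') (hγ : DenseRange γ) : ∃ Γ, IsGammaField T γ z Γ := by
  rw [← Complex.conj_conj z] at hR
  let S : E →L[ℂ] F := ⟨_, hA.continuous_resolventTrace hR' hR hT hγ⟩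
  refine ⟨adjoint S, fun f hf => ext_inner_right ℂ fun x => ?_⟩
  rw [adjoint_inner_left]
  exact hA.inner_resolventTrace hR' hT (by rwa [Complex.conj_conj]) x

theorem resolvent_sub_resolvent_eq (hA : IsKerRestriction T γ A) (hR : IsResolventAt A z R)
    (hA' : IsKerRestriction T γ' A') (hR' : IsResolventAt A' z R') {Γ : F →L[ℂ] E}
    (hΓ : IsGammaField T γ z Γ) {K : F → F}
    (hK : ∀ f : T.domain, T f = z • (f : E) → K (-γ' f) = γ f) (x : E) :
    R x - R' x = Γ (K (hA.resolventTrace hR γ' x)) := by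
  set f := hA.resolventLift hR x - hA'.resolventLift hR' x with hf
  have heig : T f = z • (f : E) := by
    rw [hf, T.map_sub, apply_resolventLift, apply_resolventLift, AddSubgroupClass.coe_sub,
      coe_resolventLift, coe_resolventLift, add_sub_add_left_eq_sub, smul_sub]
  have htrace : hA.resolventTrace hR γ' x = -γ' f := by
    rw [hf, map_sub, map_resolventLift, sub_zero]
    rfl
  rw [htrace, hK f heig, hΓ f heig]
  rfl

/-- The difference quotient of `q` is `S` applied to the solution `f` of the boundary value problem
`T f = w f`, `γ f = γ g`, and `f = (1 - (w - z) R)⁻¹ g` tends to `g`. -/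
theorem hasDerivAt_of_forall_eigenvector [CompleteSpace E] (hA : IsKerRestriction T γ A)
    (hR : IsResolventAt A z R) {S : E →L[ℂ] F} (hS : ∀ x, S x = hA.resolventTrace hR γ' x)
    {g : T.domain} (hg : T g = z • (g : E)) {q : ℂ → F}
    (hq : ∀ w, InResolventSet A w → ∀ f : T.domain, T f = w • (f : E) → γ f = γ g →
      q w - q z = γ' g - γ' f) :
    HasDerivAt q (S g) z := by
  have hlim : Tendsto (fun w => S (Ring.inverse (1 - (w - z) • R) g)) (𝓝[≠] z) (𝓝 (S g)) :=
    (((S ∘L ContinuousLinearMap.apply ℂ E (g : E)).continuous.tendsto 1).comp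
      (tendsto_inverse_one_sub_smul R z)).mono_left nhdsWithin_le_nhds
  refine hasDerivAt_iff_tendsto_slope.2 (hlim.congr' ?_)
  filter_upwards [(eventually_isUnit_one_sub_smul R z).filter_mono nhdsWithin_le_nhds,
    self_mem_nhdsWithin] with w hw hne
  have hRw := hR.mul_inverse hw
  obtain ⟨f, hf, hfg⟩ := hA.exists_eigenvector hRw g
  have hsub := hA.resolventLift_smul_eigenvector hR hf hg hfg
  have hinv : Ring.inverse (1 - (w - z) • R) g = f := by
    have hcoe : (f : E) - (w - z) • R f = g := by
      have := congrArg (Subtype.val : T.domain → E) hsub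
      rw [coe_resolventLift, map_smul, AddSubgroupClass.coe_sub] at this
      rw [this, sub_sub_cancel]
    rw [← hcoe]
    exact congr($(Ring.inverse_mul_cancel _ hw) f)
  have hdiff : q w - q z = (w - z) • S f := by
    rw [hq w ⟨_, hRw⟩ f hf hfg, ← map_smul, hS, resolventTrace, LinearMap.neg_apply,
      LinearMap.comp_apply, hsub, map_sub, neg_sub]
  rw [hinv, slope_def_module, hdiff, smul_smul, inv_mul_cancel₀ (sub_ne_zero.2 hne), one_smul]

theorem eq_comp_of_hasDerivAt [CompleteSpace E] (hA : IsKerRestriction T γ A)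
    (hR : IsResolventAt A z R) {S : E →L[ℂ] F} (hS : ∀ x, S x = hA.resolventTrace hR γ' x)
    {Γ : F →L[ℂ] E} (hΓ : IsGammaField T γ z Γ) (hγ : DenseRange γ) {q : ℂ → F →L[ℂ] F}
    {D : F →L[ℂ] F} (hD : HasDerivAt q D z)
    (hq : ∀ w, InResolventSet A w → ∀ f g : T.domain, T f = w • (f : E) → T g = z • (g : E) →
      γ f = γ g → q w (γ g) - q z (γ g) = γ' g - γ' f) :
    D = S ∘L Γ := by
  refine DFunLike.coe_injective (hγ.equalizer D.continuous (S ∘L Γ).continuous (funext fun h => ?_))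
  obtain ⟨g, hg, hgh⟩ := hA.exists_eigenvector hR h
  have hderiv : HasDerivAt (fun w => q w (γ g)) (D (γ g)) z := by
    simpa using hD.clm_apply (hasDerivAt_const z (γ g))
  have hderiv' := hA.hasDerivAt_of_forall_eigenvector hR hS hg fun w hw f hf hfg =>
    hq w hw f g hf hg hfg
  rw [Function.comp_apply, Function.comp_apply, comp_apply, ← hgh, hΓ g hg]
  exact hderiv.unique hderiv'

end IsKerRestriction

end Resolvent

section TraceFormula

universe v w

variable {E F : Type*} [NormedAddCommGroup E] [InnerProductSpace ℂ E] [CompleteSpace E]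
  [NormedAddCommGroup F] [InnerProductSpace ℂ F] [CompleteSpace F]

theorem tsum_inner_eq_tsum_inner_of_factorization {X : E →L[ℂ] E} {Y : F →L[ℂ] F}
    {P : F →L[ℂ] E} {L : E →L[ℂ] F} (hX : X = P ∘L L) (hY : Y = L ∘L P)
    {ι : Type v} {κ : Type w} (e : HilbertBasis ι ℂ E) (f : HilbertBasis κ ℂ F)
    (hsumX : ∀ (ι : Type v) (e : HilbertBasis ι ℂ E), Summable fun i => ⟪X (e i), e i⟫_ℂ)
    (hsumY : ∀ (κ : Type w) (f : HilbertBasis κ ℂ F), Summable fun j => ⟪Y (f j), f j⟫_ℂ) :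
    ∑' i, ⟪X (e i), e i⟫_ℂ = ∑' j, ⟪Y (f j), f j⟫_ℂ := by
  subst hX hY
  exact tsum_inner_comp_comm (isNuclear_of_summable_diagonal e hsumX)
    (isNuclear_of_summable_diagonal f hsumY) e f

theorem statement16_general {T A A' : E →ₗ.[ℂ] E} {γ γ' : T.domain →ₗ[ℂ] F}
    (hT : SatisfiesGreen T γ γ') (hA : IsKerRestriction T γ A) (hA' : IsKerRestriction T γ' A')
    (hAsa : IsSelfAdjoint A) {W : Submodule ℂ F} (hW : Dense (W : Set F))
    (hγ : LinearMap.range γ = W) {Q : ℂ → W → F}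
    (hQ : ∀ w, InResolventSet A w → ∀ (φ : W) (f : T.domain),
      T f = w • (f : E) → γ f = φ → Q w φ = -γ' f)
    {z : ℂ} {R R' : E →L[ℂ] E} (hR : IsResolventAt A z R) (hR' : IsResolventAt A' z R')
    {Qt : ℂ → F →L[ℂ] F}
    (hQt : ∀ w, InResolventSet A w → ∀ φ : W, Qt w φ - Qt z φ = Q w φ - Q z φ)
    {K : F →L[ℂ] F} (hK : ∀ φ : W, K (Q z φ) = φ) {D : F →L[ℂ] F} (hD : HasDerivAt Qt D z)
    (hsumE : ∀ (ι : Type v) (e : HilbertBasis ι ℂ E),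
      Summable fun i => ⟪R (e i) - R' (e i), e i⟫_ℂ)
    (hsumF : ∀ (κ : Type w) (f : HilbertBasis κ ℂ F), Summable fun j => ⟪K (D (f j)), f j⟫_ℂ)
    {ι : Type v} {κ : Type w} (e : HilbertBasis ι ℂ E) (f : HilbertBasis κ ℂ F) :
    ∑' i, ⟪R (e i) - R' (e i), e i⟫_ℂ = ∑' j, ⟪K (D (f j)), f j⟫_ℂ := by
  subst hγ
  have hdense : DenseRange γ := hW
  have hRadj := hR.adjoint hAsa
  obtain ⟨Γ, hΓ⟩ := hA.exists_isGammaField hR hRadj hT hdense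
  let S : E →L[ℂ] F := ⟨_, hA.continuous_resolventTrace hR hRadj hT hdense⟩
  have hkrein : R - R' = Γ ∘L (K ∘L S) := ContinuousLinearMap.ext <|
    hA.resolvent_sub_resolvent_eq hR hA' hR' hΓ fun f hf =>
      hQ z ⟨R, hR⟩ ⟨_, f, rfl⟩ f hf rfl ▸ hK ⟨_, f, rfl⟩
  have hderiv : D = S ∘L Γ :=
    hA.eq_comp_of_hasDerivAt hR (fun _ => rfl) hΓ hdense hD fun w hw f g hf hg hfg => by
      rw [hQt w hw ⟨γ g, g, rfl⟩, hQ w hw _ f hf hfg, hQ z ⟨R, hR⟩ _ g hg rfl, neg_sub_neg]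
  exact tsum_inner_eq_tsum_inner_of_factorization hkrein
    (congrArg (K ∘L ·) hderiv) e f hsumE hsumF

end TraceFormula

/- Abstract elliptic setting for a bounded smooth domain `Ω ⊆ ℝ²`: `H = L²(Ω)`,
`B = L²(∂Ω)`, `T = 𝓛 ↾ H²(Ω)`, traces `γ0, γ1`, `H32 = H^{3/2}(∂Ω)`, `H12 = H^{1/2}(∂Ω)`,
`AD`, `AN` the Dirichlet and Neumann realizations, `Qm` the Dirichlet-to-Neumann map,
`Qt` the Nevanlinna function equal to the closure of `Q(lam) - Re Q(lam₀)`,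
`K` the closure of `Q(lam)⁻¹` and `D = (d/dlam) Q̃(lam)`.  Since `n = 2`, the difference of
the resolvents is a trace class operator (encoded as the summability hypotheses below), and
traces are computed as `tr X = ∑ ⟪X e_i, e_i⟫` along any Hilbert basis. -/

/-- (`n = 2`) For all `lam ∈ ρ(A_D) ∩ ρ(A_N)` the trace formula
`tr((A_D - lam)⁻¹ - (A_N - lam)⁻¹) = tr( closure(Q(lam)⁻¹) · (d/dlam) Q̃(lam) )` holds. -/
theorem statement16
    (T : H →ₗ.[ℂ] H) (hTdense : Dense (T.domain : Set H))
    (γ0 γ1 : ↥T.domain →ₗ[ℂ] B)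
    (H32 H12 : Submodule ℂ B) (hH32dense : Dense (H32 : Set B)) (hH12dense : Dense (H12 : Set B))
    (hγ0mem : ∀ f : T.domain, γ0 f ∈ H32) (hγ1mem : ∀ f : T.domain, γ1 f ∈ H12)
    (hGreen : ∀ f g : T.domain,
      ⟪T f, (g : H)⟫_ℂ - ⟪(f : H), T g⟫_ℂ = ⟪γ0 f, γ1 g⟫_ℂ - ⟪γ1 f, γ0 g⟫_ℂ)
    (hsurj : ∀ φ ∈ H32, ∀ ψ ∈ H12, ∃ f : T.domain, γ0 f = φ ∧ γ1 f = ψ)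
    (AD AN : H →ₗ.[ℂ] H)
    (hAD : ∀ x y : H,
      (x, y) ∈ AD.graph ↔ ∃ hx : x ∈ T.domain, γ0 ⟨x, hx⟩ = 0 ∧ T ⟨x, hx⟩ = y)
    (hAN : ∀ x y : H,
      (x, y) ∈ AN.graph ↔ ∃ hx : x ∈ T.domain, γ1 ⟨x, hx⟩ = 0 ∧ T ⟨x, hx⟩ = y)
    (hADsa : IsSelfAdjoint AD) (hANsa : IsSelfAdjoint AN)
    (Qm : ℂ → (↥H32 →ₗ[ℂ] B))
    (hQm : ∀ lam : ℂ, InResolventSet AD lam → ∀ (φ : H32) (f : T.domain),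
      T f = lam • (f : H) → γ0 f = (φ : B) → Qm lam φ = -(γ1 f))
    (lam₀ : ℂ) (hlam₀ : InResolventSet AD lam₀)
    (hlam₀c : InResolventSet AD ((starRingEnd ℂ) lam₀))
    (Qt : ℂ → (B →L[ℂ] B))
    (hQtQ : ∀ z : ℂ, InResolventSet AD z → ∀ φ : H32,
      Qt z (φ : B) = Qm z φ - (1 / 2 : ℂ) • (Qm lam₀ φ + Qm ((starRingEnd ℂ) lam₀) φ))
    (lam : ℂ) (RD RN : H →L[ℂ] H)
    (hRD : IsResolventAt AD lam RD) (hRN : IsResolventAt AN lam RN)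
    (K : B →L[ℂ] B) (hK : ∀ φ : H32, K (Qm lam φ) = (φ : B))
    (D : B →L[ℂ] B) (hD : HasDerivAt Qt D lam)
    (hTCH : ∀ {ι : Type} (e : HilbertBasis ι ℂ H),
      Summable fun i : ι => ⟪RD (e i) - RN (e i), e i⟫_ℂ)
    (hTCB : ∀ {κ : Type} (f : HilbertBasis κ ℂ B),
      Summable fun j : κ => ⟪K (D (f j)), f j⟫_ℂ) :
    ∀ (ι κ : Type) (e : HilbertBasis ι ℂ H) (f : HilbertBasis κ ℂ B),
      ∑' i : ι, ⟪RD (e i) - RN (e i), e i⟫_ℂ = ∑' j : κ, ⟪K (D (f j)), f j⟫_ℂ := by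
  have hrange : LinearMap.range γ0 = H32 := le_antisymm (by rintro _ ⟨f, rfl⟩; exact hγ0mem f)
    fun φ hφ => (hsurj φ hφ 0 H12.zero_mem).imp fun _ => And.left
  exact fun _ _ => statement16_general hGreen hAD hAN hADsa hH32dense hrange hQm hRD hRN
    (fun w hw φ => by rw [hQtQ w hw, hQtQ lam ⟨RD, hRD⟩, sub_sub_sub_cancel_right])
    hK hD (fun _ => hTCH) (fun _ => hTCB)
end
end
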